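/- arXiv:2411.14561 — 4 statements merged into one kernel-verified Lean document; each statement's English description precedes it below -/
import Mathlib

section
/- Let V be a real vector space and a : V × V → ℝ a symmetric positive semidefinite bilinear form. Let v_1, …, v_K ∈ V and let N ∈ ℕ be such that for each index i, the number of indices j ∈ {1, …, K} with a(v_i, v_j) ≠ 0 is at most N. Then a(Σ_{i=1}^{K} v_i, Σ_{i=1}^{K} v_i) ≤ N Σ_{i=1}^{K} a(v_i, v_i). -/
/-!
Nonnegativity of `B` on `x - y` gives `B x y + B y x ≤ B x x + B y y`. Expanding
`B (∑ v i) (∑ v i)` and applying this to the pairs with `B (v i) (v j) ≠ 0` only, each diagonal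
term `B (v i) (v i)` is charged once for every `j` interacting with `i`, hence at most `N` times.
Everything is counted twice (once for each order of a pair) to avoid dividing by `2`.
-/

open Finset

section DoubleCounting

variable {ι M : Type*} [AddCommMonoid M]

theorem sum_sum_ite_add_eq_two_nsmul (s : Finset ι) {r : ι → ι → Prop} [DecidableRel r]
    (hr : ∀ i j, r i j → r j i) (f : ι → M) :
    ∑ i ∈ s, ∑ j ∈ s, (if r i j then f i + f j else 0) =
      2 • ∑ i ∈ s, #{j ∈ s | r i j} • f i := by
  have sum_left : ∑ i ∈ s, ∑ j ∈ s, (if r i j then f i else 0) =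
      ∑ i ∈ s, #{j ∈ s | r i j} • f i := by
    simp only [← sum_filter, sum_const]
  have sum_right : ∑ i ∈ s, ∑ j ∈ s, (if r i j then f j else 0) =
      ∑ i ∈ s, #{j ∈ s | r i j} • f i := by
    have r_comm (i j : ι) : r i j ↔ r j i := ⟨hr i j, hr j i⟩
    rw [sum_comm, ← sum_left]
    simp only [r_comm]
  simp only [ite_add_zero, sum_add_distrib, sum_left, sum_right, two_nsmul]

end DoubleCounting

section BilinearForm

variable {ι R V : Type*} [CommRing R] [AddCommGroup V] [Module R V] {B : V →ₗ[R] V →ₗ[R] R}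

theorem apply_add_apply_swap_le_of_isNonneg [PartialOrder R] [IsOrderedAddMonoid R]
    (hB : B.IsNonneg) (x y : V) : B x y + B y x ≤ B x x + B y y := by
  have expand : B (x - y) (x - y) = B x x + B y y - (B x y + B y x) := by
    simp only [map_sub, LinearMap.sub_apply]
    abel
  exact sub_nonneg.mp (expand ▸ hB.nonneg (x - y))

variable [LinearOrder R] [IsStrictOrderedRing R]

theorem apply_sum_sum_le_sum_card_nsmul (hrefl : B.IsRefl) (hB : B.IsNonneg)
    (s : Finset ι) (v : ι → V) :
    B (∑ i ∈ s, v i) (∑ i ∈ s, v i) ≤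
      ∑ i ∈ s, #{j ∈ s | B (v i) (v j) ≠ 0} • B (v i) (v i) := by
  have expand : B (∑ i ∈ s, v i) (∑ i ∈ s, v i) = ∑ i ∈ s, ∑ j ∈ s, B (v i) (v j) := by
    simp only [LinearMap.map_sum₂, map_sum (B (v _))]
  have pair_le (i j : ι) : B (v i) (v j) + B (v j) (v i) ≤
      if B (v i) (v j) ≠ 0 then B (v i) (v i) + B (v j) (v j) else 0 := by
    split_ifs with h
    · exact apply_add_apply_swap_le_of_isNonneg hB (v i) (v j)
    · have h_zero := not_not.mp h
      rw [h_zero, hrefl _ _ h_zero, add_zero]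
  refine le_of_nsmul_le_nsmul_right two_ne_zero ?_
  calc 2 • B (∑ i ∈ s, v i) (∑ i ∈ s, v i)
      = ∑ i ∈ s, ∑ j ∈ s, (B (v i) (v j) + B (v j) (v i)) := by
        simp only [sum_add_distrib]
        rw [sum_comm (f := fun i j ↦ B (v j) (v i)), expand, two_nsmul]
    _ ≤ ∑ i ∈ s, ∑ j ∈ s,
          (if B (v i) (v j) ≠ 0 then B (v i) (v i) + B (v j) (v j) else 0) :=
        sum_le_sum fun i _ ↦ sum_le_sum fun j _ ↦ pair_le i j
    _ = 2 • ∑ i ∈ s, #{j ∈ s | B (v i) (v j) ≠ 0} • B (v i) (v i) :=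
        sum_sum_ite_add_eq_two_nsmul s (r := fun i j ↦ B (v i) (v j) ≠ 0)
          (fun i j ↦ mt (hrefl (v j) (v i))) fun i ↦ B (v i) (v i)

theorem finite_overlap_bound_general (hrefl : B.IsRefl) (hB : B.IsNonneg)
    (s : Finset ι) (v : ι → V) (N : ℕ) (hN : ∀ i ∈ s, #{j ∈ s | B (v i) (v j) ≠ 0} ≤ N) :
    B (∑ i ∈ s, v i) (∑ i ∈ s, v i) ≤ N * ∑ i ∈ s, B (v i) (v i) :=
  calc B (∑ i ∈ s, v i) (∑ i ∈ s, v i)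
      ≤ ∑ i ∈ s, #{j ∈ s | B (v i) (v j) ≠ 0} • B (v i) (v i) :=
        apply_sum_sum_le_sum_card_nsmul hrefl hB s v
    _ ≤ ∑ i ∈ s, N • B (v i) (v i) :=
        sum_le_sum fun i hi ↦ nsmul_le_nsmul_left (hB.nonneg (v i)) (hN i hi)
    _ = N * ∑ i ∈ s, B (v i) (v i) := by rw [← smul_sum, nsmul_eq_mul]

end BilinearForm

/-- Finite-overlap estimate for a symmetric positive semidefinite bilinear form:
if each `v i` "interacts" (via `a`) with at most `N` of the vectors `v j`, then
`a(Σ v_i, Σ v_i) ≤ N Σ a(v_i, v_i)`. -/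
theorem finite_overlap_bound {V : Type*} [AddCommGroup V] [Module ℝ V]
    (a : V →ₗ[ℝ] V →ₗ[ℝ] ℝ)
    (hsymm : ∀ u v : V, a u v = a v u)
    (hpsd : ∀ v : V, 0 ≤ a v v)
    (K : ℕ) (v : Fin K → V) (N : ℕ)
    (hN : ∀ i : Fin K, {j : Fin K | a (v i) (v j) ≠ 0}.ncard ≤ N) :
    a (∑ i, v i) (∑ i, v i) ≤ N * ∑ i, a (v i) (v i) :=
  finite_overlap_bound_general (fun x y h ↦ hsymm y x ▸ h) ⟨hpsd⟩ univ v N fun i _ ↦ by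
    simpa [← Set.ncard_coe_finset] using hN i
end

section
/- Let V and Ṽ be finite-dimensional real inner product spaces, let A : V → V and Ã : Ṽ → Ṽ be self-adjoint positive-definite linear operators, let R : Ṽ → V be linear, and let c_R, c_S > 0 be constants. Assume: (i) ⟨A(Rṽ), Rṽ⟩ ≤ c_R ⟨Ãṽ, ṽ⟩ for all ṽ ∈ Ṽ; (ii) for every v ∈ V there exists ṽ ∈ Ṽ with Rṽ = v and ⟨Ãṽ, ṽ⟩ ≤ c_S ⟨Av, v⟩. Then the operator B = R ∘ Ã⁻¹ ∘ R*, where R* is the adjoint of R, satisfies c_S⁻¹ ⟨A⁻¹v, v⟩ ≤ ⟨Bv, v⟩ ≤ c_R ⟨A⁻¹v, v⟩ for all v ∈ V. -/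
open RealInnerProductSpace

/-!
If `T` is positive and `⟪T w, w⟫ ≤ c ⟪T u, w⟫`, then the last term of Young's inequality
`2 ⟪T u, w⟫ ≤ c ⟪T u, u⟫ + c⁻¹ ⟪T w, w⟫` is absorbed by the left side, so `⟪T u, w⟫ ≤ c ⟪T u, u⟫`.
Put `u = A⁻¹ v` and `x = Ã⁻¹ R* v`, so that `⟪Ã x, w⟫ = ⟪v, R w⟫` for all `w`.
The upper bound is this principle for `A` and the pair `u`, `R x`; the lower bound is the same
principle for `Ã` and the pair `x`, `w`, where `w` is a stable lift of `u`.
-/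

section FictitiousSpace

open RCLike LinearMap
open scoped InnerProductSpace

variable {𝕜 V W : Type*} [RCLike 𝕜]
  [NormedAddCommGroup V] [InnerProductSpace 𝕜 V] [NormedAddCommGroup W] [InnerProductSpace 𝕜 W]

theorem isPositive_of_forall_ne_zero_re_inner_pos {T : V →ₗ[𝕜] V} (hT : T.IsSymmetric)
    (hpos : ∀ v, v ≠ 0 → 0 < re ⟪T v, v⟫_𝕜) : T.IsPositive := by
  refine ⟨hT, fun v ↦ ?_⟩
  obtain rfl | hv := eq_or_ne v 0
  · simp
  · exact (hpos v hv).le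

theorem two_mul_re_inner_map_le_of_isPositive {T : V →ₗ[𝕜] V} (hT : T.IsPositive) {c : ℝ}
    (hc : 0 < c) (u w : V) :
    2 * re ⟪T u, w⟫_𝕜 ≤ c * re ⟪T u, u⟫_𝕜 + c⁻¹ * re ⟪T w, w⟫_𝕜 := by
  have hsymm : re ⟪T w, u⟫_𝕜 = re ⟪T u, w⟫_𝕜 := by rw [hT.isSymmetric, inner_re_symm]
  have hexpand : re ⟪T (w - (c : 𝕜) • u), w - (c : 𝕜) • u⟫_𝕜 =
      c * (c * re ⟪T u, u⟫_𝕜 + c⁻¹ * re ⟪T w, w⟫_𝕜 - 2 * re ⟪T u, w⟫_𝕜) := by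
    simp only [map_sub, map_smul, inner_sub_left, inner_sub_right, inner_smul_left,
      inner_smul_right, conj_ofReal, re_ofReal_mul, hsymm]
    field_simp
    ring
  have hnonneg := hT.re_inner_nonneg_left (w - (c : 𝕜) • u)
  rw [hexpand] at hnonneg
  exact sub_nonneg.mp (nonneg_of_mul_nonneg_right hnonneg hc)

theorem re_inner_map_le_mul_of_re_inner_map_self_le {T : V →ₗ[𝕜] V} (hT : T.IsPositive) {c : ℝ}
    (hc : 0 < c) {u w : V} (h : re ⟪T w, w⟫_𝕜 ≤ c * re ⟪T u, w⟫_𝕜) :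
    re ⟪T u, w⟫_𝕜 ≤ c * re ⟪T u, u⟫_𝕜 := by
  have hyoung := two_mul_re_inner_map_le_of_isPositive hT hc u w
  have habsorb : c⁻¹ * re ⟪T w, w⟫_𝕜 ≤ re ⟪T u, w⟫_𝕜 := (inv_mul_le_iff₀ hc).mpr h
  linarith

variable {A Ainv : V →ₗ[𝕜] V} {At Atinv : W →ₗ[𝕜] W} {R : W →ₗ[𝕜] V} {Radj : V →ₗ[𝕜] W}

theorem inner_map_rightInverse_adjoint (hRadj : ∀ v w, ⟪Radj v, w⟫_𝕜 = ⟪v, R w⟫_𝕜)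
    (hAtinv : At ∘ₗ Atinv = LinearMap.id) (v : V) (w : W) :
    ⟪At (Atinv (Radj v)), w⟫_𝕜 = ⟪v, R w⟫_𝕜 := by
  rw [← comp_apply, hAtinv, id_apply, hRadj]

theorem re_inner_preconditioner_le (hA : A.IsPositive) {cR : ℝ} (hcR : 0 < cR)
    (hR : ∀ w, re ⟪A (R w), R w⟫_𝕜 ≤ cR * re ⟪At w, w⟫_𝕜)
    (hRadj : ∀ v w, ⟪Radj v, w⟫_𝕜 = ⟪v, R w⟫_𝕜)
    (hAinv : A ∘ₗ Ainv = LinearMap.id) (hAtinv : At ∘ₗ Atinv = LinearMap.id) (v : V) :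
    re ⟪(R ∘ₗ Atinv ∘ₗ Radj) v, v⟫_𝕜 ≤ cR * re ⟪Ainv v, v⟫_𝕜 := by
  have hu : A (Ainv v) = v := LinearMap.congr_fun hAinv v
  let x := Atinv (Radj v)
  have henergy : re ⟪A (R x), R x⟫_𝕜 ≤ cR * re ⟪A (Ainv v), R x⟫_𝕜 := by
    rw [hu, ← inner_map_rightInverse_adjoint hRadj hAtinv v]
    exact hR x
  have hbound := re_inner_map_le_mul_of_re_inner_map_self_le hA hcR henergy
  rwa [hu, inner_re_symm v, inner_re_symm v] at hbound

theorem inv_mul_re_inner_le_preconditioner (hAt : At.IsPositive) {cS : ℝ} (hcS : 0 < cS)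
    (hS : ∀ v, ∃ w, R w = v ∧ re ⟪At w, w⟫_𝕜 ≤ cS * re ⟪A v, v⟫_𝕜)
    (hRadj : ∀ v w, ⟪Radj v, w⟫_𝕜 = ⟪v, R w⟫_𝕜)
    (hAinv : A ∘ₗ Ainv = LinearMap.id) (hAtinv : At ∘ₗ Atinv = LinearMap.id) (v : V) :
    cS⁻¹ * re ⟪Ainv v, v⟫_𝕜 ≤ re ⟪(R ∘ₗ Atinv ∘ₗ Radj) v, v⟫_𝕜 := by
  have hu : A (Ainv v) = v := LinearMap.congr_fun hAinv v
  have hx := inner_map_rightInverse_adjoint hRadj hAtinv v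
  obtain ⟨w, hw, hlift⟩ := hS (Ainv v)
  rw [hu] at hlift
  have henergy : re ⟪At w, w⟫_𝕜 ≤ cS * re ⟪At (Atinv (Radj v)), w⟫_𝕜 := by
    rwa [hx, hw]
  have hbound := re_inner_map_le_mul_of_re_inner_map_self_le hAt hcS henergy
  rw [hx, hx, hw, inner_re_symm v, inner_re_symm v] at hbound
  exact (inv_mul_le_iff₀ hcS).mpr hbound

theorem fictitious_space_lemma_general (hA : A.IsPositive) (hAt : At.IsPositive) {cR cS : ℝ}
    (hcR : 0 < cR) (hcS : 0 < cS)
    (hR : ∀ w, re ⟪A (R w), R w⟫_𝕜 ≤ cR * re ⟪At w, w⟫_𝕜)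
    (hS : ∀ v, ∃ w, R w = v ∧ re ⟪At w, w⟫_𝕜 ≤ cS * re ⟪A v, v⟫_𝕜)
    (hRadj : ∀ v w, ⟪Radj v, w⟫_𝕜 = ⟪v, R w⟫_𝕜)
    (hAinv : A ∘ₗ Ainv = LinearMap.id) (hAtinv : At ∘ₗ Atinv = LinearMap.id) (v : V) :
    cS⁻¹ * re ⟪Ainv v, v⟫_𝕜 ≤ re ⟪(R ∘ₗ Atinv ∘ₗ Radj) v, v⟫_𝕜 ∧
      re ⟪(R ∘ₗ Atinv ∘ₗ Radj) v, v⟫_𝕜 ≤ cR * re ⟪Ainv v, v⟫_𝕜 :=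
  ⟨inv_mul_re_inner_le_preconditioner hAt hcS hS hRadj hAinv hAtinv v,
    re_inner_preconditioner_le hA hcR hR hRadj hAinv hAtinv v⟩

end FictitiousSpace

/-- Nepomnyaschikh's fictitious space lemma: if `A` and `Ã` are self-adjoint
positive-definite operators on finite-dimensional real inner product spaces `V`
and `W`, `R : W → V` is linear with `⟨A(Rw), Rw⟩ ≤ c_R ⟨Ãw, w⟩` for all `w`, and
every `v ∈ V` admits `w` with `Rw = v` and `⟨Ãw, w⟩ ≤ c_S ⟨Av, v⟩`, then the
preconditioner `B = R ∘ Ã⁻¹ ∘ R*` satisfies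
`c_S⁻¹ ⟨A⁻¹v, v⟩ ≤ ⟨Bv, v⟩ ≤ c_R ⟨A⁻¹v, v⟩` for all `v`. -/
theorem fictitious_space_lemma
    {V W : Type*}
    [NormedAddCommGroup V] [InnerProductSpace ℝ V] [FiniteDimensional ℝ V]
    [NormedAddCommGroup W] [InnerProductSpace ℝ W] [FiniteDimensional ℝ W]
    (A : V →ₗ[ℝ] V) (At : W →ₗ[ℝ] W) (R : W →ₗ[ℝ] V)
    (cR cS : ℝ) (hcR : 0 < cR) (hcS : 0 < cS)
    (hA_sa : ∀ u v : V, ⟪A u, v⟫ = ⟪u, A v⟫)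
    (hA_pd : ∀ v : V, v ≠ 0 → 0 < ⟪A v, v⟫)
    (hAt_sa : ∀ u w : W, ⟪At u, w⟫ = ⟪u, At w⟫)
    (hAt_pd : ∀ w : W, w ≠ 0 → 0 < ⟪At w, w⟫)
    (hR : ∀ w : W, ⟪A (R w), R w⟫ ≤ cR * ⟪At w, w⟫)
    (hS : ∀ v : V, ∃ w : W, R w = v ∧ ⟪At w, w⟫ ≤ cS * ⟪A v, v⟫)
    (Ainv : V →ₗ[ℝ] V) (hAinv₁ : A ∘ₗ Ainv = LinearMap.id) (hAinv₂ : Ainv ∘ₗ A = LinearMap.id)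
    (Atinv : W →ₗ[ℝ] W) (hAtinv₁ : At ∘ₗ Atinv = LinearMap.id)
    (hAtinv₂ : Atinv ∘ₗ At = LinearMap.id) :
    ∀ v : V,
      cS⁻¹ * ⟪Ainv v, v⟫ ≤ ⟪(R ∘ₗ Atinv ∘ₗ LinearMap.adjoint R) v, v⟫ ∧
      ⟪(R ∘ₗ Atinv ∘ₗ LinearMap.adjoint R) v, v⟫ ≤ cR * ⟪Ainv v, v⟫ := by
  have hA := isPositive_of_forall_ne_zero_re_inner_pos hA_sa hA_pd
  have hAt := isPositive_of_forall_ne_zero_re_inner_pos hAt_sa hAt_pd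
  exact fictitious_space_lemma_general hA hAt hcR hcS hR hS
    (fun v w ↦ R.adjoint_inner_left w v) hAinv₁ hAtinv₁
end

section
/- Let V and V₀ be finite-dimensional real inner product spaces, let A : V → V, A₀ : V₀ → V₀, and D : V → V be self-adjoint positive-definite linear operators, let Π : V₀ → V be linear, and let c_Π, c_D, c₀ > 0 be constants. Assume: (i) ⟨A(Πv₀), Πv₀⟩ ≤ c_Π² ⟨A₀v₀, v₀⟩ for all v₀ ∈ V₀; (ii) ⟨Av, v⟩ ≤ c_D² ⟨Dv, v⟩ for all v ∈ V; (iii) for every v ∈ V there exists v₀ ∈ V₀ with ⟨A₀v₀, v₀⟩ + ⟨D(v − Πv₀), v − Πv₀⟩ ≤ c₀² ⟨Av, v⟩. Then the operator B = D⁻¹ + Π ∘ A₀⁻¹ ∘ Π*, where Π* is the adjoint of Π, satisfies c₀⁻² ⟨A⁻¹v, v⟩ ≤ ⟨Bv, v⟩ ≤ (c_D² + c_Π²) ⟨A⁻¹v, v⟩ for all v ∈ V; in particular the condition number of BA is at most c₀²(c_D² + c_Π²). -/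
open RealInnerProductSpace

/-!
A positive operator `T` makes `⟪T x, y⟫` a semi-inner product, so Cauchy–Schwarz holds for it.
Put `a = A⁻¹ v`, `d = D⁻¹ v` and `w = A₀⁻¹ Π* v`, so that `⟪B v, v⟫ = ⟪D d, d⟫ + ⟪A₀ w, w⟫`.

* Upper bound: if `⟪A x, x⟫ ≤ c ⟪A a, x⟫`, then `⟪A a, x⟫² ≤ ⟪A a, a⟫ ⟪A x, x⟫` gives
  `⟪A a, x⟫ ≤ c ⟪A a, a⟫`; take `x = d` and `x = Π w`.
* Lower bound: for a stable decomposition `a = (a - Π v₀) + Π v₀`, Cauchy–Schwarz for `D` and `A₀`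
  jointly bounds the square of `⟪v, a⟫ = ⟪D d, a - Π v₀⟫ + ⟪A₀ w, v₀⟫` by
  `⟪B v, v⟫ * (c₀² ⟪v, a⟫)`.
-/

theorem le_of_sq_le_mul_self {R : Type*} [Semiring R] [LinearOrder R] [IsStrictOrderedRing R]
    {a b : R} (hb : 0 ≤ b) (h : a ^ 2 ≤ b * a) : a ≤ b := by
  rcases le_or_gt a 0 with ha | ha
  · exact ha.trans hb
  · exact le_of_mul_le_mul_right (sq a ▸ h) ha

theorem add_sq_le_add_mul_add_of_sq_le_mul {R : Type*} [CommSemiring R] [LinearOrder R]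
    [IsStrictOrderedRing R] [ExistsAddOfLE R] {r s a b c d : R}
    (ha : 0 ≤ a) (hb : 0 ≤ b) (hc : 0 ≤ c) (hd : 0 ≤ d)
    (hr : r ^ 2 ≤ a * c) (hs : s ^ 2 ≤ b * d) : (r + s) ^ 2 ≤ (a + b) * (c + d) := by
  simpa [Fin.forall_fin_two, ha, hb, hc, hd, hr, hs] using
    Finset.univ.sum_sq_le_sum_mul_sum_of_sq_le_mul (r := ![r, s]) (f := ![a, b]) (g := ![c, d])

section PositiveOperators

open RCLike
open scoped InnerProductSpace

variable {𝕜 E F : Type*} [RCLike 𝕜]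
  [NormedAddCommGroup E] [InnerProductSpace 𝕜 E]
  [NormedAddCommGroup F] [InnerProductSpace 𝕜 F]

theorem isPositive_of_re_inner_map_self_pos {T : E →ₗ[𝕜] E} (hsymm : T.IsSymmetric)
    (hpos : ∀ x, x ≠ 0 → 0 < re ⟪T x, x⟫_𝕜) : T.IsPositive := by
  refine ⟨hsymm, fun x => ?_⟩
  rcases eq_or_ne x 0 with rfl | hx
  · simp
  · exact (hpos x hx).le

theorem norm_inner_map_sq_le {T : E →ₗ[𝕜] E} (hT : T.IsPositive) (x y : E) :
    ‖⟪T x, y⟫_𝕜‖ ^ 2 ≤ re ⟪T x, x⟫_𝕜 * re ⟪T y, y⟫_𝕜 := by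
  let core : PreInnerProductSpace.Core 𝕜 E :=
    { inner x y := ⟪T x, y⟫_𝕜
      conj_inner_symm x y := by rw [inner_conj_symm, hT.isSymmetric x y]
      re_inner_nonneg := hT.re_inner_nonneg_left
      add_left x y z := by rw [map_add, inner_add_left]
      smul_left x y r := by rw [map_smul, inner_smul_left] }
  calc ‖⟪T x, y⟫_𝕜‖ ^ 2 = ‖⟪T x, y⟫_𝕜‖ * ‖⟪T y, x⟫_𝕜‖ := by
        rw [sq, hT.isSymmetric y x, norm_inner_symm y]
    _ ≤ re ⟪T x, x⟫_𝕜 * re ⟪T y, y⟫_𝕜 :=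
        InnerProductSpace.Core.inner_mul_inner_self_le (c := core) x y

theorem re_inner_map_sq_le {T : E →ₗ[𝕜] E} (hT : T.IsPositive) (x y : E) :
    re ⟪T x, y⟫_𝕜 ^ 2 ≤ re ⟪T x, x⟫_𝕜 * re ⟪T y, y⟫_𝕜 :=
  (sq_le_sq.mpr ((abs_re_le_norm _).trans (le_abs_self _))).trans (norm_inner_map_sq_le hT x y)

theorem re_inner_map_add_sq_le {S : E →ₗ[𝕜] E} {T : F →ₗ[𝕜] F} (hS : S.IsPositive)
    (hT : T.IsPositive) (x x' : E) (y y' : F) :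
    (re ⟪S x, x'⟫_𝕜 + re ⟪T y, y'⟫_𝕜) ^ 2 ≤
      (re ⟪S x, x⟫_𝕜 + re ⟪T y, y⟫_𝕜) * (re ⟪S x', x'⟫_𝕜 + re ⟪T y', y'⟫_𝕜) :=
  add_sq_le_add_mul_add_of_sq_le_mul (hS.re_inner_nonneg_left x) (hT.re_inner_nonneg_left y)
    (hS.re_inner_nonneg_left x') (hT.re_inner_nonneg_left y')
    (re_inner_map_sq_le hS x x') (re_inner_map_sq_le hT y y')

theorem re_inner_map_le_of_re_inner_map_self_le {A : E →ₗ[𝕜] E} (hA : A.IsPositive) {c : ℝ}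
    (hc : 0 ≤ c) {a x : E} (h : re ⟪A x, x⟫_𝕜 ≤ c * re ⟪A a, x⟫_𝕜) :
    re ⟪A a, x⟫_𝕜 ≤ c * re ⟪A a, a⟫_𝕜 := by
  have ha : 0 ≤ re ⟪A a, a⟫_𝕜 := hA.re_inner_nonneg_left a
  refine le_of_sq_le_mul_self (mul_nonneg hc ha) ?_
  calc re ⟪A a, x⟫_𝕜 ^ 2 ≤ re ⟪A a, a⟫_𝕜 * re ⟪A x, x⟫_𝕜 := re_inner_map_sq_le hA a x
    _ ≤ re ⟪A a, a⟫_𝕜 * (c * re ⟪A a, x⟫_𝕜) := mul_le_mul_of_nonneg_left h ha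
    _ = c * re ⟪A a, a⟫_𝕜 * re ⟪A a, x⟫_𝕜 := by ring

end PositiveOperators

section AuxiliarySpace

open RCLike
open scoped InnerProductSpace

variable {𝕜 V V₀ : Type*} [RCLike 𝕜]
  [NormedAddCommGroup V] [InnerProductSpace 𝕜 V]
  [NormedAddCommGroup V₀] [InnerProductSpace 𝕜 V₀]
  {A Ainv D Dinv : V →ₗ[𝕜] V} {A₀ A₀inv : V₀ →ₗ[𝕜] V₀} {P : V₀ →ₗ[𝕜] V} {Padj : V →ₗ[𝕜] V₀}

theorem re_inner_map_self_inv_adjoint (hP : ∀ v v₀, ⟪Padj v, v₀⟫_𝕜 = ⟪v, P v₀⟫_𝕜)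
    (hA₀inv : A₀ ∘ₗ A₀inv = LinearMap.id) (v : V) :
    re ⟪A₀ (A₀inv (Padj v)), A₀inv (Padj v)⟫_𝕜 = re ⟪P (A₀inv (Padj v)), v⟫_𝕜 := by
  rw [show A₀ (A₀inv (Padj v)) = Padj v from LinearMap.congr_fun hA₀inv _, hP, inner_re_symm]

theorem re_inner_transfer_inv_adjoint_le (hA : A.IsPositive)
    (hP : ∀ v v₀, ⟪Padj v, v₀⟫_𝕜 = ⟪v, P v₀⟫_𝕜) {c : ℝ} (hc : 0 ≤ c)
    (hbound : ∀ v₀, re ⟪A (P v₀), P v₀⟫_𝕜 ≤ c * re ⟪A₀ v₀, v₀⟫_𝕜)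
    (hAinv : A ∘ₗ Ainv = LinearMap.id) (hA₀inv : A₀ ∘ₗ A₀inv = LinearMap.id) (v : V) :
    re ⟪P (A₀inv (Padj v)), v⟫_𝕜 ≤ c * re ⟪Ainv v, v⟫_𝕜 := by
  have hv : A (Ainv v) = v := LinearMap.congr_fun hAinv v
  have hself : re ⟪A (P (A₀inv (Padj v))), P (A₀inv (Padj v))⟫_𝕜 ≤
      c * re ⟪A (Ainv v), P (A₀inv (Padj v))⟫_𝕜 := by
    rw [hv, inner_re_symm v, ← re_inner_map_self_inv_adjoint hP hA₀inv]
    exact hbound _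
  simpa only [hv, inner_re_symm v] using re_inner_map_le_of_re_inner_map_self_le hA hc hself

theorem re_inner_inv_le_of_stable_decomposition (hD : D.IsPositive) (hA₀ : A₀.IsPositive)
    (hP : ∀ v v₀, ⟪Padj v, v₀⟫_𝕜 = ⟪v, P v₀⟫_𝕜) {c : ℝ} (hc : 0 ≤ c)
    (hdecomp : ∀ v, ∃ v₀,
      re ⟪A₀ v₀, v₀⟫_𝕜 + re ⟪D (v - P v₀), v - P v₀⟫_𝕜 ≤ c * re ⟪A v, v⟫_𝕜)
    (hAinv : A ∘ₗ Ainv = LinearMap.id) (hA₀inv : A₀ ∘ₗ A₀inv = LinearMap.id)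
    (hDinv : D ∘ₗ Dinv = LinearMap.id) (v : V) :
    re ⟪Ainv v, v⟫_𝕜 ≤ c * re ⟪(Dinv + P ∘ₗ A₀inv ∘ₗ Padj) v, v⟫_𝕜 := by
  set a := Ainv v
  set d := Dinv v
  set w := A₀inv (Padj v)
  have hAa : A a = v := LinearMap.congr_fun hAinv v
  have hDd : D d = v := LinearMap.congr_fun hDinv v
  have hA₀w : A₀ w = Padj v := LinearMap.congr_fun hA₀inv (Padj v)
  have energy : re ⟪(Dinv + P ∘ₗ A₀inv ∘ₗ Padj) v, v⟫_𝕜 = re ⟪D d, d⟫_𝕜 + re ⟪A₀ w, w⟫_𝕜 := by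
    rw [re_inner_map_self_inv_adjoint hP hA₀inv, hDd, inner_re_symm v, ← map_add,
      ← inner_add_left]
    rfl
  have energy_nonneg : 0 ≤ re ⟪D d, d⟫_𝕜 + re ⟪A₀ w, w⟫_𝕜 :=
    add_nonneg (hD.re_inner_nonneg_left d) (hA₀.re_inner_nonneg_left w)
  obtain ⟨v₀, hv₀⟩ := hdecomp a
  have split : re ⟪a, v⟫_𝕜 = re ⟪D d, a - P v₀⟫_𝕜 + re ⟪A₀ w, v₀⟫_𝕜 := by
    rw [hDd, hA₀w, hP, ← map_add, ← inner_add_right, sub_add_cancel, inner_re_symm]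
  rw [energy]
  refine le_of_sq_le_mul_self (mul_nonneg hc energy_nonneg) ?_
  calc re ⟪a, v⟫_𝕜 ^ 2
      ≤ (re ⟪D d, d⟫_𝕜 + re ⟪A₀ w, w⟫_𝕜) *
          (re ⟪D (a - P v₀), a - P v₀⟫_𝕜 + re ⟪A₀ v₀, v₀⟫_𝕜) :=
        split ▸ re_inner_map_add_sq_le hD hA₀ d (a - P v₀) w v₀
    _ ≤ (re ⟪D d, d⟫_𝕜 + re ⟪A₀ w, w⟫_𝕜) * (c * re ⟪a, v⟫_𝕜) := by
        rw [add_comm (re ⟪D (a - P v₀), _⟫_𝕜), inner_re_symm a, ← hAa]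
        exact mul_le_mul_of_nonneg_left hv₀ energy_nonneg
    _ = c * (re ⟪D d, d⟫_𝕜 + re ⟪A₀ w, w⟫_𝕜) * re ⟪a, v⟫_𝕜 := by ring

theorem auxiliary_space_lemma_general (hA : A.IsPositive) (hA₀ : A₀.IsPositive)
    (hD : D.IsPositive) (hP : ∀ v v₀, ⟪Padj v, v₀⟫_𝕜 = ⟪v, P v₀⟫_𝕜)
    {cP cD c₀ : ℝ} (hc₀ : 0 < c₀)
    (hP_bound : ∀ v₀, re ⟪A (P v₀), P v₀⟫_𝕜 ≤ cP ^ 2 * re ⟪A₀ v₀, v₀⟫_𝕜)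
    (hD_bound : ∀ v, re ⟪A v, v⟫_𝕜 ≤ cD ^ 2 * re ⟪D v, v⟫_𝕜)
    (hdecomp : ∀ v, ∃ v₀,
      re ⟪A₀ v₀, v₀⟫_𝕜 + re ⟪D (v - P v₀), v - P v₀⟫_𝕜 ≤ c₀ ^ 2 * re ⟪A v, v⟫_𝕜)
    (hAinv : A ∘ₗ Ainv = LinearMap.id) (hA₀inv : A₀ ∘ₗ A₀inv = LinearMap.id)
    (hDinv : D ∘ₗ Dinv = LinearMap.id) (v : V) :
    (c₀ ^ 2)⁻¹ * re ⟪Ainv v, v⟫_𝕜 ≤ re ⟪(Dinv + P ∘ₗ A₀inv ∘ₗ Padj) v, v⟫_𝕜 ∧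
      re ⟪(Dinv + P ∘ₗ A₀inv ∘ₗ Padj) v, v⟫_𝕜 ≤ (cD ^ 2 + cP ^ 2) * re ⟪Ainv v, v⟫_𝕜 := by
  constructor
  · rw [inv_mul_le_iff₀ (pow_pos hc₀ 2)]
    exact re_inner_inv_le_of_stable_decomposition hD hA₀ hP (sq_nonneg c₀) hdecomp hAinv hA₀inv
      hDinv v
  · have smoother_le : re ⟪Dinv v, v⟫_𝕜 ≤ cD ^ 2 * re ⟪Ainv v, v⟫_𝕜 :=
      re_inner_transfer_inv_adjoint_le (P := LinearMap.id) (Padj := LinearMap.id) hA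
        (fun _ _ => rfl) (sq_nonneg cD) hD_bound hAinv hDinv v
    have transfer_le : re ⟪P (A₀inv (Padj v)), v⟫_𝕜 ≤ cP ^ 2 * re ⟪Ainv v, v⟫_𝕜 :=
      re_inner_transfer_inv_adjoint_le hA hP (sq_nonneg cP) hP_bound hAinv hA₀inv v
    simpa only [LinearMap.add_apply, LinearMap.comp_apply, inner_add_left, map_add, add_mul]
      using add_le_add smoother_le transfer_le

end AuxiliarySpace

/-- Auxiliary space lemma (Xu): given self-adjoint positive-definite operators
`A` on `V`, `A₀` on the auxiliary space `V₀`, a smoother `D` on `V`, and a transfer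
operator `Π : V₀ → V` satisfying `⟨A(Πv₀), Πv₀⟩ ≤ c_Π² ⟨A₀v₀, v₀⟩`,
`⟨Av, v⟩ ≤ c_D² ⟨Dv, v⟩`, and a stable decomposition
`⟨A₀v₀, v₀⟩ + ⟨D(v − Πv₀), v − Πv₀⟩ ≤ c₀² ⟨Av, v⟩`, the preconditioner
`B = D⁻¹ + Π ∘ A₀⁻¹ ∘ Π*` satisfies
`c₀⁻² ⟨A⁻¹v, v⟩ ≤ ⟨Bv, v⟩ ≤ (c_D² + c_Π²) ⟨A⁻¹v, v⟩` for all `v`,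
so that the condition number of `BA` is at most `c₀²(c_D² + c_Π²)`. -/
theorem auxiliary_space_lemma
    {V V₀ : Type*}
    [NormedAddCommGroup V] [InnerProductSpace ℝ V] [FiniteDimensional ℝ V]
    [NormedAddCommGroup V₀] [InnerProductSpace ℝ V₀] [FiniteDimensional ℝ V₀]
    (A : V →ₗ[ℝ] V) (A₀ : V₀ →ₗ[ℝ] V₀) (D : V →ₗ[ℝ] V) (Pi : V₀ →ₗ[ℝ] V)
    (cPi cD c₀ : ℝ) (hcPi : 0 < cPi) (hcD : 0 < cD) (hc₀ : 0 < c₀)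
    (hA_sa : ∀ u v : V, ⟪A u, v⟫ = ⟪u, A v⟫)
    (hA_pd : ∀ v : V, v ≠ 0 → 0 < ⟪A v, v⟫)
    (hA₀_sa : ∀ u v : V₀, ⟪A₀ u, v⟫ = ⟪u, A₀ v⟫)
    (hA₀_pd : ∀ v : V₀, v ≠ 0 → 0 < ⟪A₀ v, v⟫)
    (hD_sa : ∀ u v : V, ⟪D u, v⟫ = ⟪u, D v⟫)
    (hD_pd : ∀ v : V, v ≠ 0 → 0 < ⟪D v, v⟫)
    (hPi : ∀ v₀ : V₀, ⟪A (Pi v₀), Pi v₀⟫ ≤ cPi ^ 2 * ⟪A₀ v₀, v₀⟫)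
    (hD : ∀ v : V, ⟪A v, v⟫ ≤ cD ^ 2 * ⟪D v, v⟫)
    (hdecomp : ∀ v : V, ∃ v₀ : V₀,
      ⟪A₀ v₀, v₀⟫ + ⟪D (v - Pi v₀), v - Pi v₀⟫ ≤ c₀ ^ 2 * ⟪A v, v⟫)
    (Ainv : V →ₗ[ℝ] V) (hAinv₁ : A ∘ₗ Ainv = LinearMap.id) (hAinv₂ : Ainv ∘ₗ A = LinearMap.id)
    (A₀inv : V₀ →ₗ[ℝ] V₀) (hA₀inv₁ : A₀ ∘ₗ A₀inv = LinearMap.id)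
    (hA₀inv₂ : A₀inv ∘ₗ A₀ = LinearMap.id)
    (Dinv : V →ₗ[ℝ] V) (hDinv₁ : D ∘ₗ Dinv = LinearMap.id) (hDinv₂ : Dinv ∘ₗ D = LinearMap.id) :
    ∀ v : V,
      (c₀ ^ 2)⁻¹ * ⟪Ainv v, v⟫ ≤ ⟪(Dinv + Pi ∘ₗ A₀inv ∘ₗ LinearMap.adjoint Pi) v, v⟫ ∧
      ⟪(Dinv + Pi ∘ₗ A₀inv ∘ₗ LinearMap.adjoint Pi) v, v⟫ ≤ (cD ^ 2 + cPi ^ 2) * ⟪Ainv v, v⟫ := by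
  exact auxiliary_space_lemma_general (isPositive_of_re_inner_map_self_pos hA_sa hA_pd)
    (isPositive_of_re_inner_map_self_pos hA₀_sa hA₀_pd)
    (isPositive_of_re_inner_map_self_pos hD_sa hD_pd)
    (fun v v₀ => LinearMap.adjoint_inner_left Pi v₀ v) hc₀ hPi hD hdecomp hAinv₁ hA₀inv₁ hDinv₁
end

section
/- Let V be a finite-dimensional real vector space with a symmetric positive-definite bilinear form a, and let V_0, V_1, …, V_K be subspaces of V with V_0 + V_1 + ⋯ + V_K = V. For each i, let P_i : V → V_i be the a-orthogonal projection onto V_i, i.e., a(P_i v, w) = a(v, w) for all w ∈ V_i. Then T = Σ_{i=0}^{K} P_i is invertible, and for every v ∈ V, a(T⁻¹v, v) = inf { Σ_{i=0}^{K} a(v_i, v_i) : v_i ∈ V_i for all i and Σ_{i=0}^{K} v_i = v }, where moreover this infimum is attained. -/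
/-!
Let `T = ∑ i, P i`. The defining property of the projections gives
`a w (T w) = ∑ i, a (P i w) (P i w)`. Hence `T w = 0` forces every `P i w` to vanish, so `w` is
`a`-orthogonal to all the subspaces, thus to their sum, thus to itself. The components `P i w`
decompose `T w`, and any other decomposition `u` has its energy larger by exactly the energy of the
differences `u i - P i w`, because the cross terms only depend on `∑ i, u i`.
-/

open LinearMap (BilinForm)

/-- `P` is the orthogonal projection onto `W` with respect to the bilinear form `a`, given by its
variational characterization, so that no inner product structure on `M` is required. -/
structure IsFormProjection {R M : Type*} [CommRing R] [AddCommGroup M] [Module R M]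
    (a : BilinForm R M) (W : Submodule R M) (P : M →ₗ[R] M) : Prop where
  mem : ∀ v, P v ∈ W
  apply_eq : ∀ v, ∀ w ∈ W, a (P v) w = a v w

namespace IsFormProjection

variable {R M : Type*} [CommRing R] [AddCommGroup M] [Module R M] {a : BilinForm R M}

theorem apply_apply_self {W : Submodule R M} {P : M →ₗ[R] M} (hP : IsFormProjection a W P)
    (w : M) : a (P w) (P w) = a w (P w) :=
  hP.apply_eq w (P w) (hP.mem w)

theorem le_ker_of_apply_eq_zero {W : Submodule R M} {P : M →ₗ[R] M}
    (hP : IsFormProjection a W P) {w : M} (hw : P w = 0) : W ≤ (a w).ker := fun u hu ↦ by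
  rw [LinearMap.mem_ker, ← hP.apply_eq w u hu, hw, map_zero, LinearMap.zero_apply]

theorem apply_self_eq_add_apply_sub_self {W : Submodule R M} {P : M →ₗ[R] M}
    (hP : IsFormProjection a W P) (ha : a.IsSymm) (w : M) {u : M} (hu : u ∈ W) :
    a u u = 2 * a w u - a (P w) (P w) + a (u - P w) (u - P w) := by
  have cross_left : a (P w) u = a w u := hP.apply_eq w u hu
  have cross_right : a u (P w) = a w u := (ha.eq u (P w)).trans cross_left
  simp only [map_sub, LinearMap.sub_apply, cross_left, cross_right]
  ring

variable {ι : Type*} [Fintype ι] {W : ι → Submodule R M} {P : ι → M →ₗ[R] M}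

theorem apply_sum_apply (hP : ∀ i, IsFormProjection a (W i) (P i)) (w : M) :
    a w ((∑ i, P i) w) = ∑ i, a (P i w) (P i w) := by
  simp only [LinearMap.sum_apply, map_sum, (hP _).apply_apply_self]

theorem sum_apply_self_eq_add_sum_apply_sub_self (hP : ∀ i, IsFormProjection a (W i) (P i))
    (ha : a.IsSymm) (w : M) {u : ι → M} (hu : ∀ i, u i ∈ W i)
    (hsum : ∑ i, u i = (∑ i, P i) w) :
    ∑ i, a (u i) (u i) =
      a w ((∑ i, P i) w) + ∑ i, a (u i - P i w) (u i - P i w) := by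
  have cross_terms : ∑ i, a w (u i) = a w ((∑ i, P i) w) := by rw [← map_sum, hsum]
  calc ∑ i, a (u i) (u i)
      = ∑ i, (2 * a w (u i) - a (P i w) (P i w) + a (u i - P i w) (u i - P i w)) :=
        Finset.sum_congr rfl fun i _ ↦ (hP i).apply_self_eq_add_apply_sub_self ha w (hu i)
    _ = 2 * a w ((∑ i, P i) w) - a w ((∑ i, P i) w)
          + ∑ i, a (u i - P i w) (u i - P i w) := by
        rw [Finset.sum_add_distrib, Finset.sum_sub_distrib, ← Finset.mul_sum, cross_terms,
          apply_sum_apply hP]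
    _ = a w ((∑ i, P i) w) + ∑ i, a (u i - P i w) (u i - P i w) := by ring

variable [PartialOrder R] [IsOrderedAddMonoid R]

theorem isLeast_sum_apply_self (hP : ∀ i, IsFormProjection a (W i) (P i))
    (ha : a.IsPosSemidef) (w : M) :
    IsLeast {s : R | ∃ u : ι → M,
      (∀ i, u i ∈ W i) ∧ ∑ i, u i = (∑ i, P i) w ∧ s = ∑ i, a (u i) (u i)}
      (a w ((∑ i, P i) w)) := by
  refine ⟨⟨fun i ↦ P i w, fun i ↦ (hP i).mem w, (LinearMap.sum_apply ..).symm,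
    apply_sum_apply hP w⟩, ?_⟩
  rintro _ ⟨u, hu, hsum, rfl⟩
  rw [sum_apply_self_eq_add_sum_apply_sub_self hP ha.isSymm w hu hsum]
  exact le_add_of_nonneg_right (Finset.sum_nonneg fun i _ ↦ ha.nonneg (u i - P i w))

theorem apply_eq_zero_of_sum_apply_eq_zero (hP : ∀ i, IsFormProjection a (W i) (P i))
    (ha : a.toQuadraticMap.PosDef) {w : M} (hw : (∑ i, P i) w = 0) (i : ι) : P i w = 0 := by
  have energy_eq_zero : ∑ i, a (P i w) (P i w) = 0 := by rw [← apply_sum_apply hP, hw, map_zero]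
  exact ha.anisotropic _ <|
    (Finset.sum_eq_zero_iff_of_nonneg fun i _ ↦ ha.nonneg (P i w)).1 energy_eq_zero i
      (Finset.mem_univ i)

theorem injective_sum (hP : ∀ i, IsFormProjection a (W i) (P i))
    (ha : a.toQuadraticMap.PosDef) (hW : ⨆ i, W i = ⊤) : Function.Injective ⇑(∑ i, P i) := by
  rw [injective_iff_map_eq_zero]
  intro w hw
  have top_le_ker : ⊤ ≤ (a w).ker := hW ▸ iSup_le fun i ↦
    (hP i).le_ker_of_apply_eq_zero (apply_eq_zero_of_sum_apply_eq_zero hP ha hw i)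
  exact ha.anisotropic w (top_le_ker Submodule.mem_top)

end IsFormProjection

theorem subspace_correction_identity_general {𝕜 V ι : Type*} [Field 𝕜] [PartialOrder 𝕜]
    [IsOrderedAddMonoid 𝕜] [AddCommGroup V] [Module 𝕜 V] [FiniteDimensional 𝕜 V] [Fintype ι]
    {a : BilinForm 𝕜 V} (hsymm : a.IsSymm) (hpos : a.toQuadraticMap.PosDef)
    {W : ι → Submodule 𝕜 V} (hW : ⨆ i, W i = ⊤) {P : ι → V →ₗ[𝕜] V}
    (hP : ∀ i, IsFormProjection a (W i) (P i)) :
    Function.Bijective ⇑(∑ i, P i) ∧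
      ∀ v w : V, (∑ i, P i) w = v →
        IsLeast {s : 𝕜 | ∃ u : ι → V,
          (∀ i, u i ∈ W i) ∧ ∑ i, u i = v ∧ s = ∑ i, a (u i) (u i)} (a w v) := by
  have injective := IsFormProjection.injective_sum hP hpos hW
  refine ⟨⟨injective, LinearMap.injective_iff_surjective.1 injective⟩, ?_⟩
  rintro _ w rfl
  exact IsFormProjection.isLeast_sum_apply_self hP ⟨hsymm, ⟨hpos.nonneg⟩⟩ w

/-- Xu–Zikatanov identity for parallel subspace correction: if `a` is a symmetric
positive-definite bilinear form on a finite-dimensional real vector space `V`,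
`V₀, …, V_K` are subspaces with `V₀ + ⋯ + V_K = V`, and `P i` is the
`a`-orthogonal projection onto `V i` (characterized by `P i v ∈ V i` and
`a(P i v, w) = a(v, w)` for all `w ∈ V i`), then `T = Σ_i P i` is invertible and
for every `v`, `a(T⁻¹v, v)` equals the minimum of `Σ_i a(v_i, v_i)` over all
decompositions `v = Σ_i v_i` with `v_i ∈ V i`, the infimum being attained. -/
theorem subspace_correction_identity {V : Type*} [AddCommGroup V] [Module ℝ V]
    [FiniteDimensional ℝ V]
    (a : V →ₗ[ℝ] V →ₗ[ℝ] ℝ)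
    (hsymm : ∀ u v : V, a u v = a v u)
    (hpos : ∀ v : V, v ≠ 0 → 0 < a v v)
    (K : ℕ) (Vsub : Fin (K + 1) → Submodule ℝ V)
    (hsum : (⨆ i, Vsub i) = ⊤)
    (P : Fin (K + 1) → V →ₗ[ℝ] V)
    (hPmem : ∀ i (v : V), P i v ∈ Vsub i)
    (hPproj : ∀ i (v w : V), w ∈ Vsub i → a (P i v) w = a v w) :
    Function.Bijective (∑ i, P i) ∧
      ∀ v w : V, (∑ i, P i) w = v →
        IsLeast
          {s : ℝ | ∃ vi : Fin (K + 1) → V,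
            (∀ i, vi i ∈ Vsub i) ∧ (∑ i, vi i) = v ∧ s = ∑ i, a (vi i) (vi i)}
          (a w v) := by
  simpa only [LinearMap.coe_sum] using subspace_correction_identity_general ⟨hsymm⟩ hpos hsum
    fun i ↦ ⟨hPmem i, hPproj i⟩
end
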